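/- Let ℓ be a loss function and X ∈ M^θ. Define the Lagrangian L(m, λ, X) := ∑_k m_k + λ·E[ℓ(X − m)] for m ∈ ℝ^d and λ > 0, and the multivariate optimized certainty equivalent S(λ, X) := inf_{m ∈ ℝ^d} L(m, λ, X). Then there is no duality gap: R(X) = sup_{λ > 0} S(λ, X), i.e., inf_m sup_{λ>0} L(m, λ, X) = sup_{λ>0} inf_m L(m, λ, X). -/

import Mathlib

/-!
Write `g m = E[ℓ(X - m)]` and `s m = ∑ₖ mₖ`. The lower bound `ℓ x ≥ ∑ₖ xₖ - c` and membership in the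
Orlicz heart make `X` integrable, so `g` takes values in `(-∞, ∞]`, is convex, and satisfies
`s m + g m ≥ K` with `K = E[∑ₖ Xₖ] - c`; in particular the infimum defining the risk `R` is that of a
set bounded below. Dominated convergence along `m = (n, …, n)` (`exists_slater`) gives a point with
`g m < 0`, so that set is also nonempty.

Weak duality is immediate. For the converse, the Slater point yields a Lagrange multiplier `μ ≥ 0`
with `s m + μ g m ≥ R` on the effective domain of `g` (`exists_multiplier`). As `μ` may vanish while
the supremum runs over `λ > 0` only, it is perturbed to `(1 - t) μ + t` for small `t > 0`: the convex
combination of the bounds `s + μ g ≥ R` and `s + g ≥ K` reads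
`s + ((1 - t) μ + t) g ≥ (1 - t) R + t K`, and the right-hand side tends to `R` as `t → 0`.
-/

open MeasureTheory ENNReal Pointwise

/-- The positive part of an extended real number, valued in `ℝ≥0∞`. -/
noncomputable def ERealPos (e : EReal) : ℝ≥0∞ := (max e 0).abs

/-- Extended expectation of a `(-∞,∞]`-valued integrand, as an extended real. -/
noncomputable def eexp {Ω : Type*} [MeasurableSpace Ω] (P : Measure Ω)
    (g : Ω → EReal) : EReal :=
  ((∫⁻ ω, ERealPos (g ω) ∂P) : EReal) - ((∫⁻ ω, ERealPos (-(g ω)) ∂P) : EReal)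

/-- A loss function `ℓ : ℝ^d → (-∞,∞]` with constant `c` as in (A3):
(A1) increasing, (A2) convex, lower semicontinuous with `inf ℓ < 0`,
(A3) `ℓ x ≥ ∑ₖ xₖ - c`. -/
structure IsLossFunction {d : ℕ} (ℓ : (Fin d → ℝ) → EReal) (c : ℝ) : Prop where
  mono : Monotone ℓ
  convex : ∀ x y : Fin d → ℝ, ∀ a b : ℝ, 0 ≤ a → 0 ≤ b → a + b = 1 →
    ℓ (a • x + b • y) ≤ (a : EReal) * ℓ x + (b : EReal) * ℓ y
  lsc : LowerSemicontinuous ℓ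
  inf_lt_zero : (⨅ x, ℓ x) < 0
  lower_bound : ∀ x, ((∑ k, x k : ℝ) : EReal) - (c : EReal) ≤ ℓ x

/-- Membership in the Orlicz heart `M^θ` where `θ x = ℓ |x|`:
`X` is measurable and `E[θ(λX)] < ∞` for all `λ > 0`. -/
def MemOrliczHeart {Ω : Type*} [MeasurableSpace Ω] {d : ℕ}
    (ℓ : (Fin d → ℝ) → EReal) (P : Measure Ω) (X : Ω → Fin d → ℝ) : Prop :=
  Measurable X ∧ ∀ lam : ℝ, 0 < lam → eexp P (fun ω => ℓ |lam • X ω|) < ⊤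

/-- The acceptance set `A(X) = {m : E[ℓ(X - m)] ≤ 0}`. -/
def acceptSet {Ω : Type*} [MeasurableSpace Ω] {d : ℕ}
    (ℓ : (Fin d → ℝ) → EReal) (P : Measure Ω) (X : Ω → Fin d → ℝ) : Set (Fin d → ℝ) :=
  {m | eexp P (fun ω => ℓ (X ω - m)) ≤ 0}

/-- The multivariate shortfall risk `R(X) = inf {∑ₖ mₖ : m ∈ A(X)}`. -/
noncomputable def shortfallRisk {Ω : Type*} [MeasurableSpace Ω] {d : ℕ}
    (ℓ : (Fin d → ℝ) → EReal) (P : Measure Ω) (X : Ω → Fin d → ℝ) : ℝ :=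
  sInf {s : ℝ | ∃ m ∈ acceptSet ℓ P X, s = ∑ k, m k}

/-! ### Extended expectations -/

lemma ERealPos_coe (r : ℝ) : ERealPos (r : EReal) = ENNReal.ofReal r := by
  have : max (r : EReal) 0 = ((max r 0 : ℝ) : EReal) := by
    rw [EReal.coe_strictMono.monotone.map_max, EReal.coe_zero]
  unfold ERealPos
  rw [this, EReal.abs_def, abs_of_nonneg (le_max_right _ _), ENNReal.ofReal_max,
    ENNReal.ofReal_zero, max_eq_left zero_le]

lemma ERealPos_top : ERealPos ⊤ = ⊤ := by simp [ERealPos]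

lemma ERealPos_bot : ERealPos ⊥ = 0 := by simp [ERealPos]

lemma ERealPos_mono : Monotone ERealPos := by
  intro a b hab
  induction a with
  | bot => simp [ERealPos_bot]
  | top => simp_all
  | coe a =>
    induction b with
    | bot => simp at hab
    | top => simp [ERealPos_top]
    | coe b =>
      rw [ERealPos_coe, ERealPos_coe]
      exact ENNReal.ofReal_le_ofReal (EReal.coe_le_coe_iff.1 hab)

lemma measurable_ERealPos : Measurable ERealPos := ERealPos_mono.measurable

section Expectation

variable {Ω : Type*} [MeasurableSpace Ω] {P : Measure Ω}

lemma eexp_of_ae_coe {g : Ω → EReal} {h : Ω → ℝ} (hh : Integrable h P)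
    (hgh : ∀ᵐ ω ∂P, g ω = (h ω : EReal)) : eexp P g = ((∫ ω, h ω ∂P : ℝ) : EReal) := by
  have e1 : ∫⁻ ω, ERealPos (g ω) ∂P = ∫⁻ ω, ENNReal.ofReal (h ω) ∂P :=
    lintegral_congr_ae (hgh.mono fun ω hω => by simp only [hω, ERealPos_coe])
  have e2 : ∫⁻ ω, ERealPos (-(g ω)) ∂P = ∫⁻ ω, ENNReal.ofReal (-(h ω)) ∂P :=
    lintegral_congr_ae (hgh.mono fun ω hω => by
      simp only [hω, ← EReal.coe_neg, ERealPos_coe])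
  have f1 : ∫⁻ ω, ENNReal.ofReal (h ω) ∂P ≠ ⊤ := hh.lintegral_lt_top.ne
  have f2 : ∫⁻ ω, ENNReal.ofReal (-(h ω)) ∂P ≠ ⊤ := hh.neg.lintegral_lt_top.ne
  unfold eexp
  rw [e1, e2, integral_eq_lintegral_pos_part_sub_lintegral_neg_part hh, EReal.coe_sub,
    EReal.coe_ennreal_toReal f1, EReal.coe_ennreal_toReal f2]

/-- An integrand bounded below by an integrable function has extended expectation either `∞` or
the Bochner integral of an almost surely equal real integrand. -/
lemma eexp_cases {g : Ω → EReal} (hg : Measurable g) {Y : Ω → ℝ} (hY : Integrable Y P)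
    (hYg : ∀ ω, (Y ω : EReal) ≤ g ω) :
    eexp P g = ⊤ ∨ ∃ h : Ω → ℝ, Integrable h P ∧ (∀ᵐ ω ∂P, g ω = (h ω : EReal)) ∧
      eexp P g = ((∫ ω, h ω ∂P : ℝ) : EReal) := by
  by_cases hp : ∫⁻ ω, ERealPos (g ω) ∂P = ⊤
  · left
    have hn : ∫⁻ ω, ERealPos (-(g ω)) ∂P ≠ ⊤ := by
      refine ne_top_of_le_ne_top hY.neg.lintegral_lt_top.ne (lintegral_mono fun ω => ?_)
      rw [← ERealPos_coe]
      refine ERealPos_mono ?_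
      simpa using hYg ω
    unfold eexp
    rw [hp]
    lift ∫⁻ ω, ERealPos (-(g ω)) ∂P to NNReal using hn with r
    exact EReal.top_sub_coe r
  · right
    have hfin : ∀ᵐ ω ∂P, g ω = ((g ω).toReal : EReal) := by
      filter_upwards [ae_lt_top (measurable_ERealPos.comp hg) hp] with ω hω
      refine (EReal.coe_toReal ?_ ?_).symm
      · intro h
        simp [h, ERealPos_top] at hω
      · exact ((EReal.bot_lt_coe _).trans_le (hYg ω)).ne'
    have hint : Integrable (fun ω => (g ω).toReal) P := by
      refine integrable_of_le_of_le (g₁ := Y) (g₂ := fun ω => (ERealPos (g ω)).toReal)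
        hg.ereal_toReal.aestronglyMeasurable ?_ ?_ hY
        (integrable_toReal_of_lintegral_ne_top (measurable_ERealPos.comp hg).aemeasurable hp)
      · filter_upwards [hfin] with ω hω
        have := hYg ω
        rw [hω] at this
        exact_mod_cast this
      · filter_upwards [hfin] with ω hω
        have : ERealPos (g ω) = ENNReal.ofReal (g ω).toReal := by
          conv_lhs => rw [hω]
          exact ERealPos_coe _
        show (g ω).toReal ≤ (ERealPos (g ω)).toReal
        rw [this]
        rw [ENNReal.toReal_ofReal']
        exact le_max_left _ _
    exact ⟨_, hint, hfin, eexp_of_ae_coe hint hfin⟩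

/-- Upper bounds only need to hold almost surely; together with the integrable lower bound they make
the integrand integrable. -/
lemma eexp_le_integral {g : Ω → EReal} (hg : Measurable g) {Y Z : Ω → ℝ} (hY : Integrable Y P)
    (hYg : ∀ ω, (Y ω : EReal) ≤ g ω) (hZ : Integrable Z P)
    (hgZ : ∀ᵐ ω ∂P, g ω ≤ (Z ω : EReal)) : eexp P g ≤ ((∫ ω, Z ω ∂P : ℝ) : EReal) := by
  have hfin : ∀ᵐ ω ∂P, g ω = ((g ω).toReal : EReal) := by
    filter_upwards [hgZ] with ω hω
    exact (EReal.coe_toReal (hω.trans_lt (EReal.coe_lt_top _)).ne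
      ((EReal.bot_lt_coe _).trans_le (hYg ω)).ne').symm
  have hle : ∀ᵐ ω ∂P, (g ω).toReal ≤ Z ω := by
    filter_upwards [hgZ, hfin] with ω h1 h2
    rw [h2] at h1
    exact_mod_cast h1
  have hint : Integrable (fun ω => (g ω).toReal) P := by
    refine integrable_of_le_of_le hg.ereal_toReal.aestronglyMeasurable ?_ hle hY hZ
    filter_upwards [hfin] with ω hω
    have := hYg ω
    rw [hω] at this
    exact_mod_cast this
  rw [eexp_of_ae_coe hint hfin]
  exact_mod_cast integral_mono_ae hint hZ hle

end Expectation

/-! ### Lagrange multipliers -/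

/-- Lagrange multiplier rule for a single convex constraint under Slater's condition. The
multiplier is the infimum of the slopes `(f m - R) / (-g m)` over the strictly feasible points. -/
lemma exists_multiplier {E : Type*} [AddCommGroup E] [Module ℝ E] {D : Set E} {f g : E → ℝ}
    (hf : ConvexOn ℝ D f) (hg : ConvexOn ℝ D g) {m₀ : E} (hm₀ : m₀ ∈ D) (hs : g m₀ < 0)
    {R : ℝ} (hR : ∀ m ∈ D, g m ≤ 0 → R ≤ f m) :
    ∃ μ : ℝ, 0 ≤ μ ∧ ∀ m ∈ D, R ≤ f m + μ * g m := by
  set S : Set ℝ := {r | ∃ m ∈ D, g m < 0 ∧ r = (f m - R) / (-g m)} with hS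
  have hne : S.Nonempty := ⟨_, m₀, hm₀, hs, rfl⟩
  have hlb : ∀ r ∈ S, 0 ≤ r := by
    rintro r ⟨m, hm, hgm, rfl⟩
    exact div_nonneg (by linarith [hR m hm hgm.le]) (by linarith)
  refine ⟨sInf S, le_csInf hne hlb, fun m hm => ?_⟩
  rcases lt_trichotomy (g m) 0 with h | h | h
  · have : sInf S ≤ (f m - R) / (-g m) := csInf_le ⟨0, hlb⟩ ⟨m, hm, h, rfl⟩
    rw [le_div_iff₀ (by linarith)] at this
    linarith
  · have := hR m hm h.le
    rw [h]
    linarith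
  · have : (R - f m) / g m ≤ sInf S := by
      refine le_csInf hne ?_
      rintro r ⟨m₁, hm₁, h₁, rfl⟩
      -- The convex combination at which the affine interpolation of `g` vanishes is feasible.
      have hd : 0 < g m - g m₁ := by linarith
      have ha : 0 ≤ g m / (g m - g m₁) := by positivity
      have hb : 0 ≤ -g m₁ / (g m - g m₁) := div_nonneg (by linarith) hd.le
      have hab : g m / (g m - g m₁) + -g m₁ / (g m - g m₁) = 1 := by
        field_simp
        ring
      have hg' := hg.2 hm₁ hm ha hb hab
      have hf' := hf.2 hm₁ hm ha hb hab
      have hfeas := hR _ (hg.1 hm₁ hm ha hb hab) (hg'.trans (le_of_eq (by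
        simp only [smul_eq_mul]
        field_simp
        ring)))
      have h3 := hfeas.trans hf'
      simp only [smul_eq_mul] at h3
      have h4 : R * (g m - g m₁) ≤ g m * f m₁ + -g m₁ * f m := by
        have := mul_le_mul_of_nonneg_right h3 hd.le
        have e : (g m / (g m - g m₁) * f m₁ + -g m₁ / (g m - g m₁) * f m) * (g m - g m₁)
            = g m * f m₁ + -g m₁ * f m := by field_simp
        linarith
      rw [div_le_div_iff₀ h (by linarith)]
      nlinarith
    rw [div_le_iff₀ h] at this
    linarith

/-! ### Expected losses -/

section Loss

variable {Ω : Type*} [MeasurableSpace Ω] {P : Measure Ω} [IsProbabilityMeasure P]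
  {d : ℕ} {ℓ : (Fin d → ℝ) → EReal} {c : ℝ} {X : Ω → Fin d → ℝ}

lemma IsLossFunction.coe_le (hℓ : IsLossFunction ℓ c) (x : Fin d → ℝ) :
    ((∑ k, x k - c : ℝ) : EReal) ≤ ℓ x := by
  rw [EReal.coe_sub]
  exact hℓ.lower_bound x

lemma IsLossFunction.ne_bot (hℓ : IsLossFunction ℓ c) (x : Fin d → ℝ) : ℓ x ≠ ⊥ :=
  ((EReal.bot_lt_coe _).trans_le (hℓ.coe_le x)).ne'

/-- For `X` in the Orlicz heart, `ℓ(|X|)` has an integrable real version. -/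
lemma exists_bound (hℓ : IsLossFunction ℓ c) (hX : MemOrliczHeart ℓ P X) :
    ∃ H : Ω → ℝ, Integrable H P ∧ ∀ᵐ ω ∂P, ℓ |X ω| = (H ω : EReal) := by
  have hlt := hX.2 1 one_pos
  simp only [one_smul] at hlt
  have hmeas : Measurable fun ω => ℓ |X ω| := by
    refine hℓ.lsc.measurable.comp (measurable_pi_lambda _ fun k => ?_)
    exact ((measurable_pi_apply k).comp hX.1).abs
  rcases eexp_cases hmeas (integrable_const (μ := P) (-c)) (fun ω => by
      refine le_trans ?_ (hℓ.coe_le _)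
      have : 0 ≤ ∑ k, |X ω| k := Finset.sum_nonneg fun k _ => by
        rw [Pi.abs_apply]; exact abs_nonneg _
      exact_mod_cast (by linarith : -c ≤ ∑ k, |X ω| k - c)) with h | ⟨H, h1, h2, -⟩
  · exact absurd h hlt.ne
  · exact ⟨H, h1, h2⟩

lemma integrable_coord (hℓ : IsLossFunction ℓ c) (hX : MemOrliczHeart ℓ P X) (k : Fin d) :
    Integrable (fun ω => X ω k) P := by
  obtain ⟨H, hH, hHe⟩ := exists_bound hℓ hX
  refine Integrable.mono' (hH.add (integrable_const c))
    ((measurable_pi_apply k).comp hX.1).aestronglyMeasurable ?_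
  filter_upwards [hHe] with ω hω
  have h1 := hℓ.coe_le |X ω|
  rw [hω] at h1
  have h2 : ∑ k, |X ω| k - c ≤ H ω := by exact_mod_cast h1
  have h3 : |X ω| k ≤ ∑ k, |X ω| k :=
    Finset.single_le_sum (f := fun k => |X ω| k) (fun k _ => by
      rw [Pi.abs_apply]; exact abs_nonneg _) (Finset.mem_univ k)
  rw [Pi.abs_apply] at h3
  simp only [Real.norm_eq_abs, Pi.add_apply]
  linarith

lemma integrable_lower (hℓ : IsLossFunction ℓ c) (hX : MemOrliczHeart ℓ P X) (m : Fin d → ℝ) :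
    Integrable (fun ω => ∑ k, (X ω - m) k - c) P := by
  refine Integrable.sub (integrable_finsetSum _ fun k _ => ?_) (integrable_const c)
  exact (integrable_coord hℓ hX k).sub (integrable_const (m k))

lemma measurable_loss (hℓ : IsLossFunction ℓ c) (hX : Measurable X) (m : Fin d → ℝ) :
    Measurable fun ω => ℓ (X ω - m) :=
  hℓ.lsc.measurable.comp (hX.sub_const m)

lemma integral_lower (hℓ : IsLossFunction ℓ c) (hX : MemOrliczHeart ℓ P X) (m : Fin d → ℝ) :
    ∫ ω, (∑ k, (X ω - m) k - c) ∂P = (∫ ω, ∑ k, X ω k ∂P - c) - ∑ k, m k := by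
  have hi : Integrable (fun ω => ∑ k, X ω k) P :=
    integrable_finsetSum _ fun k _ => integrable_coord hℓ hX k
  have : (fun ω => ∑ k, (X ω - m) k - c) = fun ω => ∑ k, X ω k - (∑ k, m k + c) := by
    funext ω
    simp only [Pi.sub_apply, Finset.sum_sub_distrib]
    ring
  rw [this, integral_sub hi (integrable_const _)]
  simp
  ring

lemma loss_cases (hℓ : IsLossFunction ℓ c) (hX : MemOrliczHeart ℓ P X) (m : Fin d → ℝ) :
    eexp P (fun ω => ℓ (X ω - m)) = ⊤ ∨ ∃ h : Ω → ℝ, Integrable h P ∧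
      (∀ᵐ ω ∂P, ℓ (X ω - m) = (h ω : EReal)) ∧
      eexp P (fun ω => ℓ (X ω - m)) = ((∫ ω, h ω ∂P : ℝ) : EReal) :=
  eexp_cases (measurable_loss hℓ hX.1 m) (integrable_lower hℓ hX m) fun _ => hℓ.coe_le _

lemma loss_ne_bot (hℓ : IsLossFunction ℓ c) (hX : MemOrliczHeart ℓ P X) (m : Fin d → ℝ) :
    eexp P (fun ω => ℓ (X ω - m)) ≠ ⊥ := by
  rcases loss_cases hℓ hX m with h | ⟨h, -, -, h3⟩
  · simp [h]
  · rw [h3]; exact EReal.coe_ne_bot _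

/-- The bound `∑ₖ mₖ + E[ℓ(X - m)] ≥ E[∑ₖ Xₖ] - c`. -/
lemma lower_le (hℓ : IsLossFunction ℓ c) (hX : MemOrliczHeart ℓ P X) (m : Fin d → ℝ) :
    (((∫ ω, ∑ k, X ω k ∂P - c) - ∑ k, m k : ℝ) : EReal) ≤ eexp P (fun ω => ℓ (X ω - m)) := by
  rcases loss_cases hℓ hX m with h | ⟨h, h1, h2, h3⟩
  · simp [h]
  · rw [h3, ← integral_lower hℓ hX m]
    refine EReal.coe_le_coe_iff.2 (integral_mono_ae (integrable_lower hℓ hX m) h1 ?_)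
    filter_upwards [h2] with ω hω
    have := hℓ.coe_le (X ω - m)
    rw [hω] at this
    exact EReal.coe_le_coe_iff.1 this

lemma loss_convex (hℓ : IsLossFunction ℓ c) (hX : MemOrliczHeart ℓ P X) {m₁ m₂ : Fin d → ℝ}
    (h₁ : eexp P (fun ω => ℓ (X ω - m₁)) ≠ ⊤) (h₂ : eexp P (fun ω => ℓ (X ω - m₂)) ≠ ⊤)
    {a b : ℝ} (ha : 0 ≤ a) (hb : 0 ≤ b) (hab : a + b = 1) :
    eexp P (fun ω => ℓ (X ω - (a • m₁ + b • m₂))) ≤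
      ((a * (eexp P (fun ω => ℓ (X ω - m₁))).toReal +
        b * (eexp P (fun ω => ℓ (X ω - m₂))).toReal : ℝ) : EReal) := by
  obtain ⟨u, u1, u2, u3⟩ := (loss_cases hℓ hX m₁).resolve_left h₁
  obtain ⟨v, v1, v2, v3⟩ := (loss_cases hℓ hX m₂).resolve_left h₂
  rw [u3, v3, EReal.toReal_coe, EReal.toReal_coe, ← integral_const_mul, ← integral_const_mul,
    ← integral_add (u1.const_mul a) (v1.const_mul b)]
  refine eexp_le_integral (measurable_loss hℓ hX.1 _) (integrable_lower hℓ hX _)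
    (fun ω => hℓ.coe_le _) ((u1.const_mul a).add (v1.const_mul b)) ?_
  filter_upwards [u2, v2] with ω hu hv
  have e : X ω - (a • m₁ + b • m₂) = a • (X ω - m₁) + b • (X ω - m₂) := by
    have : X ω = (a + b) • X ω := by rw [hab, one_smul]
    rw [smul_sub, smul_sub]
    conv_lhs => rw [this, add_smul]
    abel
  rw [e]
  refine (hℓ.convex _ _ a b ha hb hab).trans ?_
  rw [hu, hv]
  exact_mod_cast le_refl _

open Filter Topology in
/-- Slater's condition. If `ℓ x₀ = e < 0`, then `max (ℓ(X - (n, …, n))) e` converges to `e`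
pointwise, dominated via `ℓ(|X|)`; hence `E[ℓ(X - (n, …, n))] < 0` for large `n`. -/
lemma exists_slater (hℓ : IsLossFunction ℓ c) (hX : MemOrliczHeart ℓ P X) :
    ∃ m : Fin d → ℝ, eexp P (fun ω => ℓ (X ω - m)) < 0 := by
  obtain ⟨x₀, hx₀⟩ := iInf_lt_iff.1 hℓ.inf_lt_zero
  obtain ⟨e, he⟩ : ∃ e : ℝ, ℓ x₀ = (e : EReal) :=
    ⟨(ℓ x₀).toReal, (EReal.coe_toReal (hx₀.trans EReal.zero_lt_top).ne (hℓ.ne_bot _)).symm⟩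
  have he0 : e < 0 := by
    rw [he] at hx₀
    exact_mod_cast hx₀
  obtain ⟨H, hH, hHe⟩ := exists_bound hℓ hX
  set Z : ℕ → Ω → ℝ := fun n ω => (max (ℓ (X ω - fun _ => (n : ℝ))) (e : EReal)).toReal with hZ
  have hle : ∀ (n : ℕ) ω, ℓ (X ω - fun _ => (n : ℝ)) ≤ ℓ |X ω| := fun n ω => hℓ.mono fun k => by
    simp only [Pi.sub_apply, Pi.abs_apply]
    linarith [le_abs_self (X ω k), (Nat.cast_nonneg n : (0 : ℝ) ≤ n)]
  have hZc : ∀ᵐ ω ∂P, ∀ n : ℕ, max (ℓ (X ω - fun _ => (n : ℝ))) (e : EReal) = (Z n ω : EReal) := by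
    filter_upwards [hHe] with ω hω n
    refine (EReal.coe_toReal ?_ ?_).symm
    · refine (max_lt ?_ (EReal.coe_lt_top _)).ne
      exact (hle n ω).trans_lt (hω ▸ EReal.coe_lt_top _)
    · exact ((EReal.bot_lt_coe e).trans_le (le_max_right _ _)).ne'
  have hZm : ∀ n, AEStronglyMeasurable (Z n) P := fun n =>
    ((measurable_loss hℓ hX.1 _).max measurable_const).ereal_toReal.aestronglyMeasurable
  have hb : Integrable (fun ω => |H ω| + |e|) P := hH.abs.add (integrable_const _)
  have hbd : ∀ n, ∀ᵐ ω ∂P, ‖Z n ω‖ ≤ |H ω| + |e| := fun n => by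
    filter_upwards [hZc, hHe] with ω h1 h2
    have l1 : e ≤ Z n ω := by
      rw [← EReal.coe_le_coe_iff, ← h1 n]
      exact le_max_right _ _
    have l2 : Z n ω ≤ max (H ω) e := by
      rw [← EReal.coe_le_coe_iff, ← h1 n, EReal.coe_strictMono.monotone.map_max, ← h2]
      exact max_le_max (hle n ω) le_rfl
    rw [Real.norm_eq_abs, abs_le]
    constructor
    · linarith [neg_abs_le e, abs_nonneg (H ω)]
    · refine l2.trans (max_le ?_ ?_)
      · linarith [le_abs_self (H ω), abs_nonneg e]
      · linarith [le_abs_self e, abs_nonneg (H ω)]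
  have hlim : ∀ᵐ ω ∂P, Tendsto (fun n => Z n ω) atTop (𝓝 e) := ae_of_all _ fun ω => by
    refine tendsto_const_nhds.congr' ?_
    have : ∀ᶠ n : ℕ in atTop, ∀ k, X ω k - x₀ k ≤ (n : ℝ) :=
      eventually_all.2 fun k => tendsto_natCast_atTop_atTop.eventually_ge_atTop _
    filter_upwards [this] with n hn
    have : ℓ (X ω - fun _ => (n : ℝ)) ≤ (e : EReal) := by
      rw [← he]
      exact hℓ.mono fun k => by
        simp only [Pi.sub_apply]
        linarith [hn k]
    simp only [hZ, max_eq_right this, EReal.toReal_coe]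
  have hconv := tendsto_integral_of_dominated_convergence _ hZm hb hbd hlim
  rw [integral_const, probReal_univ, one_smul] at hconv
  obtain ⟨n, hn⟩ := (hconv.eventually_lt_const he0).exists
  refine ⟨fun _ => (n : ℝ), (eexp_le_integral (measurable_loss hℓ hX.1 _)
    (integrable_lower hℓ hX _) (fun ω => hℓ.coe_le _) (hb.mono' (hZm n) (hbd n)) ?_).trans_lt
    (EReal.coe_lt_coe_iff.2 hn)⟩
  filter_upwards [hZc] with ω hω
  rw [← hω n]
  exact le_max_left _ _

end Loss

/-! ### Duality -/

/-- No duality gap: `R(X) = sup_{λ>0} inf_m { ∑ₖ mₖ + λ E[ℓ(X - m)] }`. -/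
theorem shortfallRisk_no_duality_gap
    {Ω : Type*} [MeasurableSpace Ω] (P : Measure Ω) [IsProbabilityMeasure P]
    {d : ℕ} (ℓ : (Fin d → ℝ) → EReal) (c : ℝ) (hℓ : IsLossFunction ℓ c)
    (X : Ω → Fin d → ℝ) (hX : MemOrliczHeart ℓ P X) :
    ((shortfallRisk ℓ P X : ℝ) : EReal) =
      ⨆ (lam : ℝ) (_ : 0 < lam), ⨅ m : Fin d → ℝ,
        (((∑ k, m k : ℝ) : EReal) + (lam : EReal) * eexp P (fun ω => ℓ (X ω - m))) := by
  set g : (Fin d → ℝ) → EReal := fun m => eexp P (fun ω => ℓ (X ω - m)) with hg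
  set K : ℝ := ∫ ω, ∑ k, X ω k ∂P - c with hK
  set R : ℝ := shortfallRisk ℓ P X with hR
  have hKg : ∀ m, ((K - ∑ k, m k : ℝ) : EReal) ≤ g m := lower_le hℓ hX
  have hcoe : ∀ m, g m ≠ ⊤ → g m = ((g m).toReal : EReal) := fun m hm =>
    (EReal.coe_toReal hm (loss_ne_bot hℓ hX m)).symm
  obtain ⟨m₀, hm₀⟩ := exists_slater hℓ hX
  have hbdd : BddBelow {s : ℝ | ∃ m ∈ acceptSet ℓ P X, s = ∑ k, m k} := by
    refine ⟨K, ?_⟩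
    rintro s ⟨m, hm, rfl⟩
    have h : ((K - ∑ k, m k : ℝ) : EReal) ≤ ((0 : ℝ) : EReal) := (hKg m).trans hm
    linarith [EReal.coe_le_coe_iff.1 h]
  have hne : {s : ℝ | ∃ m ∈ acceptSet ℓ P X, s = ∑ k, m k}.Nonempty := ⟨_, m₀, hm₀.le, rfl⟩
  have hRle : ∀ m, g m ≤ 0 → R ≤ ∑ k, m k := fun m hm => csInf_le hbdd ⟨m, hm, rfl⟩
  refine le_antisymm ?_ ?_
  · have hD : ∀ {m₁ m₂ : Fin d → ℝ}, g m₁ ≠ ⊤ → g m₂ ≠ ⊤ → ∀ {a b : ℝ}, 0 ≤ a → 0 ≤ b →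
        a + b = 1 → g (a • m₁ + b • m₂) ≤ ((a * (g m₁).toReal + b * (g m₂).toReal : ℝ) : EReal) :=
      fun h₁ h₂ _ _ ha hb hab => loss_convex hℓ hX h₁ h₂ ha hb hab
    have hDc : Convex ℝ {m | g m ≠ ⊤} := fun m₁ h₁ m₂ h₂ a b ha hb hab =>
      ((hD h₁ h₂ ha hb hab).trans_lt (EReal.coe_lt_top _)).ne
    have hgc : ConvexOn ℝ {m | g m ≠ ⊤} fun m => (g m).toReal := by
      refine ⟨hDc, fun m₁ h₁ m₂ h₂ a b ha hb hab => ?_⟩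
      have h := hD h₁ h₂ ha hb hab
      rw [hcoe _ (hDc h₁ h₂ ha hb hab)] at h
      exact EReal.coe_le_coe_iff.1 h
    have hfc : ConvexOn ℝ {m | g m ≠ ⊤} fun m : Fin d → ℝ => ∑ k, m k := by
      refine ⟨hDc, fun m₁ _ m₂ _ a b _ _ _ => le_of_eq ?_⟩
      simp [Finset.sum_add_distrib, Finset.mul_sum]
    have hm₀t : g m₀ ≠ ⊤ := (hm₀.trans EReal.zero_lt_top).ne
    obtain ⟨μ, hμ, hμR⟩ := exists_multiplier hfc hgc (m₀ := m₀) hm₀t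
      (by
        have h : g m₀ < 0 := hm₀
        rw [hcoe m₀ hm₀t] at h
        exact_mod_cast h) (R := R)
      (fun m hm h => hRle m (by
        rw [hcoe m hm]
        exact_mod_cast h))
    refine EReal.ge_of_forall_gt_iff_ge.1 fun z hz => ?_
    have hz' : z < R := EReal.coe_lt_coe_iff.1 hz
    -- A weight `t` so small that `(1 - t) R + t K ≥ z`.
    obtain ⟨t, ht0, ht1, ht⟩ : ∃ t : ℝ, 0 < t ∧ t ≤ 1 ∧ z ≤ (1 - t) * R + t * K := by
      have hd : 0 < (R - z) + |R - K| := by linarith [abs_nonneg (R - K)]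
      refine ⟨(R - z) / ((R - z) + |R - K|), ?_, ?_, ?_⟩
      · exact div_pos (by linarith) hd
      · rw [div_le_one hd]
        linarith [abs_nonneg (R - K)]
      · have h1 : (R - z) / ((R - z) + |R - K|) * |R - K| ≤ R - z := by
          rw [div_mul_eq_mul_div, div_le_iff₀ hd]
          nlinarith
        have h2 := mul_le_mul_of_nonneg_left (le_abs_self (R - K))
          (div_pos (by linarith : 0 < R - z) hd).le
        linarith
    have hl : 0 < (1 - t) * μ + t := by
      have : 0 ≤ (1 - t) * μ := mul_nonneg (by linarith) hμ
      linarith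
    refine le_trans (le_iInf fun m => ?_) (le_iSup₂ (f := fun (lam : ℝ) (_ : 0 < lam) =>
      ⨅ m : Fin d → ℝ, (((∑ k, m k : ℝ) : EReal) + (lam : EReal) * g m)) ((1 - t) * μ + t) hl)
    show (z : EReal) ≤ ((∑ k, m k : ℝ) : EReal) + (((1 - t) * μ + t : ℝ) : EReal) * g m
    by_cases hm : g m = ⊤
    · rw [hm, EReal.coe_mul_top_of_pos hl, EReal.coe_add_top]
      exact le_top
    · have h1 := hμR m hm
      have h2 := hKg m
      rw [hcoe m hm] at h2 ⊢
      have h3 := EReal.coe_le_coe_iff.1 h2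
      have h4 := mul_le_mul_of_nonneg_left h1 (by linarith : 0 ≤ 1 - t)
      have h5 := mul_le_mul_of_nonneg_left h3 ht0.le
      have : z ≤ ∑ k, m k + ((1 - t) * μ + t) * (g m).toReal := by nlinarith
      exact_mod_cast this
  · refine iSup₂_le fun lam hlam => ?_
    have hle : ∀ m, g m ≤ 0 → (⨅ m : Fin d → ℝ, (((∑ k, m k : ℝ) : EReal) + (lam : EReal) * g m))
        ≤ ((∑ k, m k : ℝ) : EReal) := fun m hm => by
      have h : (lam : EReal) * g m ≤ 0 :=
        EReal.mul_nonpos_iff.2 (Or.inl ⟨by exact_mod_cast hlam.le, hm⟩)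
      refine (iInf_le _ m).trans ?_
      have h' := add_le_add (le_refl ((∑ k, m k : ℝ) : EReal)) h
      rwa [add_zero] at h'
    refine EReal.ge_of_forall_gt_iff_ge.1 fun z hz => ?_
    refine EReal.coe_le_coe_iff.2 (le_csInf hne ?_)
    rintro s ⟨m, hm, rfl⟩
    exact (EReal.coe_lt_coe_iff.1 (hz.trans_le (hle m hm))).le
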